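/- For every n ≥ 1, the polynomial p_n(t) = Σ_{P ∈ 𝒫ℱ_n} t^{pv(P)} satisfies p_n(t) = t · Π_{i=1}^{n−1} ((2i+1)·t + (n − i)). -/

import Mathlib

/-- Labeled plane trees: a root label together with a linearly ordered list of subtrees. -/
inductive PT : Type
  | node (label : ℕ) (children : List PT) : PT

/-- The multiset of labels of a plane tree. -/
def PT.labels : PT → Multiset ℕ
  | .node a ch => a ::ₘ (ch.attach.map fun c => PT.labels c.1).sum
decreasing_by
  have := List.sizeOf_lt_of_mem c.2
  simp only [PT.node.sizeOf_spec]
  omega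

/-- The number of *proper* vertices of a plane tree: a vertex is proper if its label is
the smallest label in its descendant subtree (including itself). -/
def PT.pv : PT → ℕ
  | .node a ch =>
      (if ∀ b ∈ (ch.map PT.labels).sum, a ≤ b then 1 else 0)
        + (ch.attach.map fun c => PT.pv c.1).sum
decreasing_by
  have := List.sizeOf_lt_of_mem c.2
  simp only [PT.node.sizeOf_spec]
  omega

/-- `𝒫ℱ_n`: plane forests on `[n]`, i.e. sequences of (nonempty) plane trees whose
label sets are disjoint with union `[n] = {1,…,n}`. -/
def PF (n : ℕ) : Type :=
  {l : List PT // (l.map PT.labels).sum = (Finset.Icc 1 n).val}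

/-- The number of proper vertices of a plane forest. -/
def pvPF (l : List PT) : ℕ := (l.map PT.pv).sum

/-!
Let `F` and `T` be the exponential generating functions of plane forests and of plane trees,
weighted by `t ^ pv`. Splitting off the first tree of a forest gives `F = 1 + T * F`. Removing the
root of a tree on `m + 1` labels leaves a forest on `m` labels, and exactly one of the `m + 1`
possible roots is proper, so `T' = t * F + X * F'`. Eliminating `T` yields
`F' = F ^ 2 * (t * F + X * F')`, which turns into a recurrence expressing `[X ^ (n + 1)] F ^ s`
through `[X ^ n] F ^ (s + 2)`; iterating it from `s = 1` produces the product.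
-/

open Finset PowerSeries
open scoped Nat

section PowerSeries

lemma coeff_X_mul_derivative {R : Type*} [CommSemiring R] (f : R⟦X⟧) (n : ℕ) :
    coeff n (X * d⁄dX R f) = n * coeff n f := by
  cases n with
  | zero => simp
  | succ n => rw [coeff_succ_X_mul, coeff_derivative, mul_comm, Nat.cast_succ]

section DifferentialEquation

variable {R : Type*} [CommRing R] {f : R⟦X⟧} {t : R} {r : ℕ}

lemma derivative_pow_of_derivative_eq (hf : d⁄dX R f = f ^ r * (C t * f + X * d⁄dX R f)) (s : ℕ) :
    (s + r) • d⁄dX R (f ^ s) = s • ((s + r) • (C t * f ^ (s + r)) + X * d⁄dX R (f ^ (s + r))) := by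
  cases s with
  | zero => simp
  | succ s =>
    rw [derivative_pow, derivative_pow, Nat.add_right_comm s 1 r, Nat.add_sub_cancel,
      Nat.add_sub_cancel]
    simp only [nsmul_eq_mul]
    push_cast
    linear_combination ((s + 1 + r) * (s + 1) * f ^ s : R⟦X⟧) * hf

lemma coeff_succ_pow_of_derivative_eq (hf : d⁄dX R f = f ^ r * (C t * f + X * d⁄dX R f))
    (s n : ℕ) :
    (s + r) * ((n + 1) * coeff (n + 1) (f ^ s)) =
      s * (((s + r) * t + n) * coeff n (f ^ (s + r))) := by
  have h := congrArg (coeff n) (derivative_pow_of_derivative_eq hf s)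
  rw [map_nsmul, map_nsmul, map_add, map_nsmul, coeff_C_mul, coeff_derivative,
    coeff_X_mul_derivative] at h
  simp only [nsmul_eq_mul, Nat.cast_add] at h
  linear_combination h

theorem factorial_mul_coeff_pow_of_derivative_eq [IsDomain R] [CharZero R]
    (hf : d⁄dX R f = f ^ r * (C t * f + X * d⁄dX R f)) (hf₀ : constantCoeff f = 1) (s n : ℕ) :
    (n + 1)! * coeff (n + 1) (f ^ s) =
      s * t * ∏ i ∈ range n, (((i + 1) * r + s : ℕ) * t + (n - i : ℕ)) := by
  rcases s.eq_zero_or_pos with rfl | hs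
  · simp [coeff_one]
  have hsr {s : ℕ} (hs : 0 < s) : (s + r : R) ≠ 0 := by
    exact_mod_cast (Nat.add_pos_left hs r).ne'
  induction n generalizing s with
  | zero =>
    have h := coeff_succ_pow_of_derivative_eq hf s 0
    rw [coeff_zero_eq_constantCoeff_apply (f ^ (s + r)), map_pow constantCoeff, hf₀, one_pow] at h
    apply mul_left_cancel₀ (hsr hs)
    simp only [zero_add, range_zero, prod_empty, Nat.factorial_one, Nat.cast_zero, Nat.cast_one]
      at h ⊢
    linear_combination h
  | succ n ih =>
    have hprod : ∏ i ∈ range n, (((i + 1 + 1) * r + s : ℕ) * t + (n + 1 - (i + 1) : ℕ)) =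
        ∏ i ∈ range n, (((i + 1) * r + (s + r) : ℕ) * t + (n - i : ℕ)) :=
      prod_congr rfl fun i _ => by
        rw [Nat.add_sub_add_right, show (i + 1 + 1) * r + s = (i + 1) * r + (s + r) by ring]
    have h := coeff_succ_pow_of_derivative_eq hf s (n + 1)
    have ih := ih (s + r) (Nat.add_pos_left hs r)
    rw [prod_range_succ', hprod, Nat.factorial_succ]
    apply mul_left_cancel₀ (hsr hs)
    push_cast at h ih ⊢
    linear_combination ((n + 1)! : R) * h + (s : R) * ((s + r) * t + (n + 1)) * ih

end DifferentialEquation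

section Egf

variable {K : Type*} [Field K]

/-- The exponential generating function `∑ aₙ xⁿ / n!` of a sequence `a`. -/
noncomputable def egf (a : ℕ → K) : K⟦X⟧ := PowerSeries.mk fun n => a n / n !

@[simp]
lemma coeff_egf (a : ℕ → K) (n : ℕ) : coeff n (egf a) = a n / n ! := coeff_mk _ _

variable [CharZero K]

lemma egf_mul (a b : ℕ → K) :
    egf a * egf b = egf fun n => ∑ m ∈ range (n + 1), n.choose m • (a m * b (n - m)) := by
  ext n
  rw [coeff_mul, Nat.sum_antidiagonal_eq_sum_range_succ_mk, coeff_egf, sum_div]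
  refine sum_congr rfl fun m hm => ?_
  rw [coeff_egf, coeff_egf, nsmul_eq_mul, Nat.cast_choose K (mem_range_succ_iff.1 hm)]
  have := Nat.factorial_ne_zero n
  field_simp

lemma derivative_egf (a : ℕ → K) : d⁄dX K (egf a) = egf fun n => a (n + 1) := by
  ext n
  rw [coeff_derivative, coeff_egf, coeff_egf, Nat.factorial_succ]
  push_cast
  field_simp

end Egf

end PowerSeries

section Decomposition

/-- The multiset of labels of a plane forest. -/
def forestLabels (l : List PT) : Multiset ℕ := (l.map PT.labels).sum

lemma PT.labels_node (a : ℕ) (l : List PT) : (PT.node a l).labels = a ::ₘ forestLabels l := by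
  rw [PT.labels, forestLabels, List.attach_map_val (f := PT.labels)]

lemma PT.pv_node (a : ℕ) (l : List PT) :
    (PT.node a l).pv = (if ∀ b ∈ forestLabels l, a ≤ b then 1 else 0) + pvPF l := by
  rw [PT.pv, pvPF, forestLabels, List.attach_map_val (f := PT.pv)]

lemma PT.labels_ne_zero (T : PT) : T.labels ≠ 0 := by
  cases T
  simp [PT.labels_node]

@[simp]
lemma forestLabels_nil : forestLabels [] = 0 := rfl

@[simp]
lemma forestLabels_cons (T : PT) (l : List PT) :
    forestLabels (T :: l) = T.labels + forestLabels l := by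
  simp [forestLabels]

@[simp]
lemma pvPF_cons (T : PT) (l : List PT) : pvPF (T :: l) = T.pv + pvPF l := by
  simp [pvPF]

lemma forestLabels_eq_zero {l : List PT} : forestLabels l = 0 ↔ l = [] := by
  cases l <;> simp [PT.labels_ne_zero]

lemma finite_setOf_forestLabels_eq (s : Multiset ℕ) : {l | forestLabels l = s}.Finite := by
  induction s using Multiset.strongInductionOn with
  | ih s ih =>
    have hU : (⋃ u ∈ Set.Iio s, {l | forestLabels l = u}).Finite := (Set.finite_Iio s).biUnion ih
    refine (((s.toFinset.finite_toSet.prod (hU.prod hU)).image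
      fun x => PT.node x.1 x.2.1 :: x.2.2).insert []).subset ?_
    rintro (_ | ⟨⟨a, c⟩, l⟩) rfl
    · exact Set.mem_insert _ _
    have ha : a ∈ forestLabels (PT.node a c :: l) := by simp [PT.labels_node]
    have hc : forestLabels c < forestLabels (PT.node a c :: l) := by
      rw [forestLabels_cons, PT.labels_node]
      exact (Multiset.lt_cons_self _ _).trans_le (Multiset.le_add_right _ _)
    have hl : forestLabels l < forestLabels (PT.node a c :: l) := by
      rw [forestLabels_cons]
      exact lt_add_of_pos_left _ (pos_iff_ne_zero.2 (PT.labels_ne_zero _))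
    exact Set.mem_insert_of_mem _ ⟨(a, c, l), ⟨Multiset.mem_toFinset.2 ha,
      Set.mem_biUnion hc rfl, Set.mem_biUnion hl rfl⟩, rfl⟩

lemma PT.finite_setOf_labels_eq (s : Multiset ℕ) : {T : PT | T.labels = s}.Finite :=
  ((finite_setOf_forestLabels_eq s).preimage (List.singleton_injective.injOn)).subset
    fun T hT => by simpa using hT

/-- The plane forests whose labels are exactly the elements of `S`, each occurring once. -/
noncomputable def forestsOn (S : Finset ℕ) : Finset (List PT) :=
  (finite_setOf_forestLabels_eq S.val).toFinset

/-- The plane trees whose labels are exactly the elements of `S`, each occurring once. -/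
noncomputable def treesOn (S : Finset ℕ) : Finset PT :=
  (PT.finite_setOf_labels_eq S.val).toFinset

variable {S : Finset ℕ}

@[simp]
lemma mem_forestsOn {l : List PT} : l ∈ forestsOn S ↔ forestLabels l = S.val := by
  simp [forestsOn]

@[simp]
lemma mem_treesOn {T : PT} : T ∈ treesOn S ↔ T.labels = S.val := by
  simp [treesOn]

lemma forestsOn_empty : forestsOn ∅ = {[]} := by
  ext l
  simp [forestLabels_eq_zero]

lemma treesOn_empty : treesOn ∅ = ∅ := by
  ext T
  simp [PT.labels_ne_zero]

lemma cons_mem_forestsOn {T : PT} {l : List PT} :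
    T :: l ∈ forestsOn S ↔ ∃ B ⊆ S, T ∈ treesOn B ∧ l ∈ forestsOn (S \ B) := by
  simp only [mem_forestsOn, mem_treesOn, forestLabels_cons, sdiff_val]
  constructor
  · intro h
    have hT : T.labels ≤ S.val := h ▸ Multiset.le_add_right _ _
    exact ⟨⟨T.labels, Multiset.nodup_of_le hT S.nodup⟩, val_le_iff.1 hT, rfl, by simp [← h]⟩
  · rintro ⟨B, hB, hT, hl⟩
    rw [hT, hl, add_tsub_cancel_of_le (val_le_iff.2 hB)]

lemma node_mem_treesOn {a : ℕ} {l : List PT} :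
    PT.node a l ∈ treesOn S ↔ a ∈ S ∧ l ∈ forestsOn (S.erase a) := by
  simp only [mem_forestsOn, mem_treesOn, PT.labels_node, erase_val]
  constructor
  · intro h
    exact ⟨by simp [← mem_val, ← h], by simp [← h]⟩
  · rintro ⟨ha, hl⟩
    rw [hl, Multiset.cons_erase ha]

end Decomposition

section Enumeration

variable {R : Type*} [CommSemiring R] (t : R)

/-- The enumerator of the plane forests on the label set `S` by proper vertices; for `S = [n]`
this is `pₙ(t)`. -/
noncomputable def forestSum (S : Finset ℕ) : R := ∑ l ∈ forestsOn S, t ^ pvPF l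

/-- The enumerator of the plane trees on the label set `S` by proper vertices. -/
noncomputable def treeSum (S : Finset ℕ) : R := ∑ T ∈ treesOn S, t ^ T.pv

@[simp]
lemma forestSum_empty : forestSum t ∅ = 1 := by
  simp [forestSum, forestsOn_empty, pvPF]

@[simp]
lemma treeSum_empty : treeSum t ∅ = 0 := by
  simp [treeSum, treesOn_empty]

lemma map_forestSum {R' : Type*} [CommSemiring R'] (f : R →+* R') (S : Finset ℕ) :
    f (forestSum t S) = forestSum (f t) S := by
  simp [forestSum]

lemma finsum_PF_eq_forestSum (n : ℕ) : ∑ᶠ F : PF n, t ^ pvPF F.1 = forestSum t (Icc 1 n) := by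
  have h : {l | (l.map PT.labels).sum = (Icc 1 n).val} = (forestsOn (Icc 1 n) : Set (List PT)) := by
    ext l
    simp [forestLabels]
  calc ∑ᶠ F : PF n, t ^ pvPF F.1
    _ = ∑ᶠ l ∈ {l | (l.map PT.labels).sum = (Icc 1 n).val}, t ^ pvPF l :=
      finsum_set_coe_eq_finsum_mem (f := fun l => t ^ pvPF l) _
    _ = forestSum t (Icc 1 n) := by rw [h, finsum_mem_coe_finset, forestSum]

lemma forestSum_eq_sum_powerset {S : Finset ℕ} (hS : S.Nonempty) :
    forestSum t S = ∑ B ∈ S.powerset, treeSum t B * forestSum t (S \ B) := by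
  simp only [forestSum, treeSum, sum_mul_sum, ← sum_product', sum_sigma']
  symm
  refine sum_bij (fun x _ => x.2.1 :: x.2.2) ?_ ?_ ?_ ?_
  · rintro ⟨B, T, l⟩ h
    simp only [mem_sigma, mem_product, mem_powerset] at h
    exact cons_mem_forestsOn.2 ⟨B, h⟩
  · rintro ⟨B, T, l⟩ h ⟨B', T', l'⟩ h' heq
    simp only [mem_sigma, mem_product, mem_treesOn] at h h'
    obtain ⟨rfl, rfl⟩ := List.cons.inj heq
    obtain rfl : B = B' := val_injective (h.2.1.symm.trans h'.2.1)
    rfl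
  · rintro (_ | ⟨T, l⟩) h
    · simp [eq_comm, hS.ne_empty] at h
    · obtain ⟨B, hB, hT, hl⟩ := cons_mem_forestsOn.1 h
      exact ⟨⟨B, T, l⟩, by simp_all, rfl⟩
  · simp [pow_add]

lemma treeSum_eq_sum_erase (S : Finset ℕ) :
    treeSum t S = ∑ a ∈ S, (if ∀ b ∈ S, a ≤ b then t else 1) * forestSum t (S.erase a) := by
  simp only [forestSum, treeSum, mul_sum, sum_sigma']
  symm
  refine sum_bij (fun x _ => PT.node x.1 x.2) ?_ ?_ ?_ ?_
  · rintro ⟨a, l⟩ h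
    exact node_mem_treesOn.2 (mem_sigma.1 h)
  · rintro ⟨a, l⟩ - ⟨a', l'⟩ - heq
    obtain ⟨rfl, rfl⟩ := PT.node.inj heq
    rfl
  · rintro ⟨a, l⟩ h
    exact ⟨⟨a, l⟩, mem_sigma.2 (node_mem_treesOn.1 h), rfl⟩
  · rintro ⟨a, l⟩ h
    obtain ⟨ha, hl⟩ := mem_sigma.1 h
    have hroot : (∀ b ∈ forestLabels l, a ≤ b) ↔ ∀ b ∈ S, a ≤ b := by
      conv_rhs => rw [← insert_erase ha, forall_mem_insert]
      simp only [mem_forestsOn.1 hl, mem_val, le_refl, true_and]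
    simp only [PT.pv_node, hroot, pow_add]
    split_ifs <;> simp

lemma sum_ite_forall_le {S : Finset ℕ} (hS : S.Nonempty) :
    ∑ a ∈ S, (if ∀ b ∈ S, a ≤ b then t else 1) = t + (#S - 1 : ℕ) := by
  have hmin {a : ℕ} (ha : a ∈ S) : (∀ b ∈ S, a ≤ b) ↔ a = S.min' hS :=
    ⟨fun h => (h _ (S.min'_mem hS)).antisymm (S.min'_le a ha), fun h b hb => h ▸ S.min'_le b hb⟩
  rw [← add_sum_erase _ _ (S.min'_mem hS), if_pos ((hmin (S.min'_mem hS)).2 rfl),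
    ← card_erase_of_mem (S.min'_mem hS), card_eq_sum_ones, Nat.cast_sum]
  congr 1
  refine sum_congr rfl fun a ha => ?_
  rw [if_neg ((hmin (mem_of_mem_erase ha)).not.2 (ne_of_mem_erase ha)), Nat.cast_one]

lemma treeSum_eq_of_forestSum_erase {S : Finset ℕ} (hS : S.Nonempty) {c : R}
    (hc : ∀ a ∈ S, forestSum t (S.erase a) = c) : treeSum t S = (t + (#S - 1 : ℕ)) * c := by
  rw [treeSum_eq_sum_erase, ← sum_ite_forall_le t hS, sum_mul]
  exact sum_congr rfl fun a ha => by rw [hc a ha]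

lemma forestSum_eq_sum_range {S : Finset ℕ} (hS : S.Nonempty)
    (h : ∀ B : Finset ℕ, #B < #S → forestSum t B = forestSum t (range #B)) :
    forestSum t S = ∑ m ∈ range (#S + 1),
      (#S).choose m • (treeSum t (range m) * forestSum t (range (#S - m))) := by
  rw [forestSum_eq_sum_powerset t hS, ← sum_powerset_apply_card
    fun m => treeSum t (range m) * forestSum t (range (#S - m))]
  refine sum_congr rfl fun B hB => ?_
  have hBS := mem_powerset.1 hB
  rcases B.eq_empty_or_nonempty with rfl | hne
  · simp
  have herase {A : Finset ℕ} (hA : #A = #B) :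
      ∀ a ∈ A, forestSum t (A.erase a) = forestSum t (range (#B - 1)) := fun a ha => by
    rw [h _ ((card_erase_lt_of_mem ha).trans_le (hA ▸ card_le_card hBS)), card_erase_of_mem ha, hA]
  rw [h (S \ B) (card_lt_card (sdiff_ssubset hBS hne)), card_sdiff_of_subset hBS,
    treeSum_eq_of_forestSum_erase t hne (herase rfl),
    treeSum_eq_of_forestSum_erase t (nonempty_range_iff.2 hne.card_pos.ne')
      (herase (card_range _)), card_range]

theorem forestSum_eq_forestSum_range_card (S : Finset ℕ) :
    forestSum t S = forestSum t (range #S) := by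
  induction hn : #S using Nat.strong_induction_on generalizing S with
  | _ n ih =>
    subst hn
    rcases S.eq_empty_or_nonempty with rfl | hS
    · simp
    have hrange : (range #S).Nonempty := nonempty_range_iff.2 hS.card_pos.ne'
    rw [forestSum_eq_sum_range t hS fun B hB => ih _ hB B rfl,
      forestSum_eq_sum_range t hrange fun B hB => ih _ (by simpa using hB) B rfl, card_range]

lemma treeSum_range_succ (n : ℕ) :
    treeSum t (range (n + 1)) = (t + n) * forestSum t (range n) := by
  rw [treeSum_eq_of_forestSum_erase t nonempty_range_add_one (c := forestSum t (range n)),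
    card_range, Nat.add_sub_cancel]
  intro a ha
  rw [forestSum_eq_forestSum_range_card, card_erase_of_mem ha, card_range, Nat.add_sub_cancel]

end Enumeration

section GeneratingFunctions

variable {K : Type*} [Field K] [CharZero K] (t : K)

/-- The exponential generating function of plane forests, counted by proper vertices. -/
noncomputable def forestEgf : K⟦X⟧ := egf fun n => forestSum t (range n)

/-- The exponential generating function of plane trees, counted by proper vertices. -/
noncomputable def treeEgf : K⟦X⟧ := egf fun n => treeSum t (range n)

lemma forestEgf_eq : forestEgf t = 1 + treeEgf t * forestEgf t := by
  rw [forestEgf, treeEgf, egf_mul]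
  ext n
  rw [map_add, coeff_egf, coeff_egf, coeff_one]
  rcases n.eq_zero_or_pos with rfl | hn
  · simp
  rw [if_neg hn.ne', zero_add, forestSum_eq_sum_range t (nonempty_range_iff.2 hn.ne')
    fun B _ => forestSum_eq_forestSum_range_card t B, card_range]

lemma derivative_treeEgf :
    d⁄dX K (treeEgf t) = C t * forestEgf t + X * d⁄dX K (forestEgf t) := by
  rw [treeEgf, derivative_egf]
  ext n
  rw [map_add, coeff_C_mul, coeff_X_mul_derivative, forestEgf, coeff_egf, coeff_egf,
    treeSum_range_succ]
  ring

lemma derivative_forestEgf : d⁄dX K (forestEgf t) =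
    forestEgf t ^ 2 * (C t * forestEgf t + X * d⁄dX K (forestEgf t)) := by
  have hF := forestEgf_eq t
  have hF' : d⁄dX K (forestEgf t) =
      treeEgf t * d⁄dX K (forestEgf t) + forestEgf t * d⁄dX K (treeEgf t) := by
    conv_lhs => rw [hF]
    simp [Derivation.leibniz]
  rw [derivative_treeEgf] at hF'
  linear_combination forestEgf t * hF' - d⁄dX K (forestEgf t) * hF

lemma forestSum_range_succ_of_field (n : ℕ) : forestSum t (range (n + 1)) =
    t * ∏ i ∈ range n, ((2 * (i + 1) + 1 : ℕ) * t + (n - i : ℕ)) := by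
  have hF₀ : constantCoeff (forestEgf t) = 1 := by
    simp [← coeff_zero_eq_constantCoeff_apply, forestEgf]
  have h := factorial_mul_coeff_pow_of_derivative_eq (derivative_forestEgf t) hF₀ 1 n
  have hn : ((n + 1)! : K) ≠ 0 := by exact_mod_cast (n + 1).factorial_ne_zero
  rw [pow_one, forestEgf, coeff_egf, mul_div_cancel₀ _ hn] at h
  simpa [mul_comm 2] using h

end GeneratingFunctions

theorem forestSum_range_succ {R : Type*} [CommSemiring R] (t : R) (n : ℕ) :
    forestSum t (range (n + 1)) =
      t * ∏ i ∈ range n, ((2 * (i + 1) + 1 : ℕ) * t + (n - i : ℕ)) := by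
  -- Both sides are values at `t` of polynomials over `ℕ`, which agree if they do at all rationals.
  have hX : forestSum (Polynomial.X : Polynomial ℕ) (range (n + 1)) = Polynomial.X *
      ∏ i ∈ range n, ((2 * (i + 1) + 1 : ℕ) * Polynomial.X + (n - i : ℕ)) := by
    apply Polynomial.map_injective (Nat.castRingHom ℚ) Nat.cast_injective
    refine Polynomial.funext fun q => ?_
    rw [Polynomial.eval_map, Polynomial.eval_map, ← Polynomial.coe_eval₂RingHom, map_forestSum,
      map_mul, map_prod]
    simpa using forestSum_range_succ_of_field q n
  have h := congrArg (Polynomial.eval₂RingHom (Nat.castRingHom R) t) hX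
  rw [map_forestSum, map_mul, map_prod] at h
  simpa using h

theorem planeForest_poly_general {R : Type*} [CommSemiring R] (n : ℕ) (hn : 1 ≤ n) (t : R) :
    ∑ᶠ F : PF n, t ^ pvPF F.1 =
      t * ∏ i ∈ Icc 1 (n - 1), ((2 * i + 1 : ℕ) * t + (n - i : ℕ)) := by
  obtain ⟨n, rfl⟩ := Nat.exists_eq_add_of_le' hn
  rw [finsum_PF_eq_forestSum, forestSum_eq_forestSum_range_card, Nat.card_Icc, Nat.add_sub_cancel,
    forestSum_range_succ, ← Ico_add_one_right_eq_Icc, prod_Ico_eq_prod_range, Nat.add_sub_cancel,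
    Nat.add_sub_cancel]
  simp only [add_comm 1, Nat.add_sub_add_right]

/-- For `n ≥ 1`, the polynomial `p_n(t) = Σ_{P ∈ 𝒫ℱ_n} t^{pv(P)}` is given by
`p_n(t) = t · Π_{i=1}^{n-1} ((2i+1)·t + (n-i))`. -/
theorem planeForest_poly (n : ℕ) (hn : 1 ≤ n) (t : ℚ) :
    (∑ᶠ F : PF n, t ^ pvPF F.1) =
      t * ∏ i ∈ Finset.Icc 1 (n - 1), ((2 * i + 1 : ℕ) * t + ((n - i : ℕ) : ℚ)) :=
  planeForest_poly_general n hn t
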